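/- Let X be a set and let 𝓚(X) ⊆ ℝ^{X×X} denote the set of kernels of hyperbolic type on X, with the topology of pointwise convergence. For K ∈ 𝓚(X), define its critical exponent t_K ∈ [1,∞] as the supremum of the set of t ∈ [1,∞) such that the pointwise power K^t is a kernel of hyperbolic type. Then: (a) the map K ↦ t_K is upper semicontinuous on 𝓚(X); (b) for every K ∈ 𝓚(X) with t_K < ∞, the kernel K^{t_K} is of hyperbolic type. -/

import Mathlib

/-- A kernel of hyperbolic type on a set `X`: symmetric, nonnegative, with diagonal `1`,
satisfying the hyperbolic Cauchy–Schwarz inequalities. -/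
def IsHypKernel {X : Type*} (K : X → X → ℝ) : Prop :=
  (∀ x y, K x y = K y x) ∧ (∀ x y, 0 ≤ K x y) ∧ (∀ x, K x x = 1) ∧
  ∀ (n : ℕ) (x₀ : X) (x : Fin n → X) (lam : Fin n → ℝ),
    (∑ i, ∑ j, lam i * lam j * K (x i) (x j)) ≤ (∑ k, lam k * K x₀ (x k)) ^ 2

/-- The critical exponent of a kernel: the supremum (in `[1,∞] ⊆ EReal`) of the
`t ∈ [1,∞)` for which the pointwise power `K^t` is of hyperbolic type. -/
noncomputable def critExp {X : Type*} (K : X → X → ℝ) : EReal :=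
  sSup {t : EReal | ∃ s : ℝ, t = (s : EReal) ∧ 1 ≤ s ∧
    IsHypKernel (fun x y => K x y ^ s)}

/-!
A symmetric `K` satisfies the hyperbolic Cauchy–Schwarz inequalities if and only if, for every base
point `x₀`, the kernel `K(x₀,x) K(x₀,y) - K(x,y)` is positive semidefinite, or equivalently so is
`A(x,y) = 1 - K(x,y) / (K(x₀,x) K(x₀,y))`. The diagonal of `A` lies in `[0,1)`, so all its entries
lie in `(-1,1)`. For `0 ≤ t ≤ 1` the function `1 - (1 - a) ^ t` has a power series on `(-1,1)` with
nonnegative coefficients, so by the Schur product theorem it preserves positive semidefiniteness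
when applied entrywise to `A`. Hence `K ^ t` is again of hyperbolic type, and
`{s ≥ 0 | K ^ s is of hyperbolic type}` is an interval starting at `0`. It is closed because the
hyperbolic Cauchy–Schwarz inequalities are closed conditions, so it equals `{s ≥ 0 | s ≤ t_K}`;
for the same reason `{K | s ≤ t_K}` is closed for each `s ≥ 0`.
-/

open Set
open scoped Matrix ComplexOrder

section BinomialSeries

theorem succ_nsmul_choose_succ {R : Type*} [NonAssocRing R] [Pow R ℕ] [NatPowAssoc R]
    [BinomialRing R] (r : R) (k : ℕ) :
    (k + 1) • Ring.choose r (k + 1) = Ring.choose r k * (r - k) := by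
  simpa using Ring.choose_smul_choose r k.le_succ

theorem neg_one_pow_mul_choose_succ_nonneg {R : Type*} [CommRing R] [LinearOrder R]
    [IsStrictOrderedRing R] [BinomialRing R] {t : R} (ht₀ : 0 ≤ t) (ht₁ : t ≤ 1) (k : ℕ) :
    0 ≤ (-1) ^ k * Ring.choose t (k + 1) := by
  induction k with
  | zero => simpa using ht₀
  | succ k ih =>
    have hrec : ((k + 1 : ℕ) + 1 : R) * ((-1) ^ (k + 1) * Ring.choose t (k + 1 + 1)) =
        (-1) ^ k * Ring.choose t (k + 1) * ((k + 1 : ℕ) - t) := by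
      have h := succ_nsmul_choose_succ t (k + 1)
      rw [nsmul_eq_mul, Nat.cast_succ] at h
      linear_combination (-1) ^ (k + 1) * h
    have ht : t ≤ (k + 1 : ℕ) := ht₁.trans (by simp)
    exact nonneg_of_mul_nonneg_right (hrec ▸ mul_nonneg ih (sub_nonneg.2 ht)) (by positivity)

theorem hasSum_one_sub_rpow (t : ℝ) {x : ℝ} (hx : |x| < 1) :
    HasSum (fun k : ℕ => (-1) ^ k * Ring.choose t k * x ^ k) ((1 - x) ^ t) := by
  have h := (Real.one_add_rpow_hasFPowerSeriesOnBall_zero (a := t)).hasSum (y := -x)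
    (by simpa [enorm_eq_nnnorm, ← NNReal.coe_lt_coe] using hx)
  simp only [binomialSeries_apply, zero_add, List.ofFn_const, List.prod_replicate,
    smul_eq_mul, neg_pow x] at h
  simpa only [mul_left_comm, mul_assoc, sub_eq_add_neg] using h

theorem hasSum_one_sub_one_sub_rpow (t : ℝ) {x : ℝ} (hx : |x| < 1) :
    HasSum (fun k : ℕ => (-1) ^ k * Ring.choose t (k + 1) * x ^ (k + 1)) (1 - (1 - x) ^ t) := by
  have h := ((hasSum_nat_add_iff' 1).2 (hasSum_one_sub_rpow t hx)).neg
  simpa [pow_succ (-1 : ℝ)] using h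

end BinomialSeries

section PosSemidef

theorem posSemidef_vecMulVec_star {ι R : Type*} [Ring R] [PartialOrder R] [StarRing R]
    [StarOrderedRing R] (v : ι → R) : (Matrix.vecMulVec v (star v)).PosSemidef := by
  refine ⟨?_, fun x => ?_⟩
  · ext i j
    simp [Matrix.vecMulVec_apply]
  · have h : (x.sum fun i a => x.sum fun j b => star a * Matrix.vecMulVec v (star v) i j * b) =
        star (x.sum fun i a => star (v i) * a) * x.sum fun i a => star (v i) * a := by
      simp [Finsupp.sum, Matrix.vecMulVec_apply, Finset.sum_mul_sum, mul_assoc]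
    exact h ▸ star_mul_self_nonneg _

theorem posSemidef_of_hasSum {ι κ R : Type*} [Ring R] [PartialOrder R] [StarRing R]
    [IsOrderedAddMonoid R] [TopologicalSpace R] [IsTopologicalSemiring R] [ContinuousStar R]
    [OrderClosedTopology R] {A : κ → Matrix ι ι R} {B : Matrix ι ι R} (h : HasSum A B)
    (hA : ∀ k, (A k).PosSemidef) : B.PosSemidef := by
  have hentry (i j : ι) : HasSum (fun k => A k i j) (B i j) := Pi.hasSum.1 (Pi.hasSum.1 h i) j
  have hherm : HasSum A Bᴴ := by
    simpa only [fun k => (hA k).isHermitian.eq] using h.matrix_conjTranspose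
  refine ⟨hherm.unique h, fun x => ?_⟩
  have hform : HasSum (fun k => x.sum fun i a => x.sum fun j b => star a * A k i j * b)
      (x.sum fun i a => x.sum fun j b => star a * B i j * b) :=
    hasSum_sum fun i _ => hasSum_sum fun j _ => ((hentry i j).mul_left _).mul_right _
  exact hform.nonneg fun k => (hA k).2 x

variable {ι : Type*} {𝕜 : Type*} [RCLike 𝕜]

theorem posSemidef_map_pow {A : Matrix ι ι 𝕜} (hA : A.PosSemidef) (k : ℕ) :
    (A.map (· ^ k)).PosSemidef := by
  induction k with
  | zero =>
    convert posSemidef_vecMulVec_star (1 : ι → 𝕜)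
    ext i j
    simp [Matrix.vecMulVec_apply]
  | succ k ih =>
    convert ih.hadamard hA
    ext i j
    simp [pow_succ]

theorem mul_apply_le_mul_diag_of_posSemidef {A : Matrix ι ι 𝕜} (hA : A.PosSemidef) (i j : ι) :
    A i j * A j i ≤ A i i * A j j := by
  have h := (hA.submatrix ![i, j]).det_nonneg
  rw [Matrix.det_fin_two] at h
  exact sub_nonneg.1 h

theorem abs_apply_lt_one_of_posSemidef {A : Matrix ι ι ℝ} (hA : A.PosSemidef)
    (hdiag : ∀ i, A i i < 1) (i j : ι) : |A i j| < 1 := by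
  have hsymm : A j i = A i j := by simpa using hA.isHermitian.apply i j
  have hle : A i j ^ 2 ≤ A i i * A j j := by
    simpa [hsymm, sq] using mul_apply_le_mul_diag_of_posSemidef hA i j
  have hlt : A i i * A j j < 1 :=
    mul_lt_one_of_nonneg_of_lt_one_left hA.diag_nonneg (hdiag i) (hdiag j).le
  exact sq_lt_one_iff_abs_lt_one _ |>.1 (hle.trans_lt hlt)

theorem posSemidef_map_one_sub_one_sub_rpow {t : ℝ} (ht₀ : 0 ≤ t) (ht₁ : t ≤ 1)
    {A : Matrix ι ι ℝ} (hA : A.PosSemidef) (hdiag : ∀ i, A i i < 1) :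
    (A.map fun a => 1 - (1 - a) ^ t).PosSemidef := by
  have hsum : HasSum (fun k : ℕ => ((-1) ^ k * Ring.choose t (k + 1)) • A.map (· ^ (k + 1)))
      (A.map fun a => 1 - (1 - a) ^ t) :=
    Pi.hasSum.2 fun i => Pi.hasSum.2 fun j =>
      hasSum_one_sub_one_sub_rpow t (abs_apply_lt_one_of_posSemidef hA hdiag i j)
  exact posSemidef_of_hasSum hsum fun k =>
    (posSemidef_map_pow hA (k + 1)).smul (neg_one_pow_mul_choose_succ_nonneg ht₀ ht₁ k)

theorem posSemidef_rpow_mul_rpow_sub_rpow {t : ℝ} (ht₀ : 0 ≤ t) (ht₁ : t ≤ 1)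
    {B : Matrix ι ι ℝ} {v : ι → ℝ} (hv : ∀ i, 0 < v i) (hB : ∀ i j, 0 ≤ B i j)
    (hdiag : ∀ i, 0 < B i i) (h : (Matrix.of fun i j => v i * v j - B i j).PosSemidef) :
    (Matrix.of fun i j => v i ^ t * v j ^ t - B i j ^ t).PosSemidef := by
  let A : Matrix ι ι ℝ := Matrix.of fun i j => 1 - B i j / (v i * v j)
  have hA_eq : A = Matrix.of (fun i j => v i * v j - B i j) ⊙ Matrix.vecMulVec v⁻¹ (star v⁻¹) := by
    ext i j
    have hi := (hv i).ne'
    have hj := (hv j).ne'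
    simp only [A, Matrix.of_apply, Matrix.hadamard_apply, Matrix.vecMulVec_apply, Pi.inv_apply,
      star_trivial]
    field_simp
  have hA : A.PosSemidef := hA_eq ▸ h.hadamard (posSemidef_vecMulVec_star v⁻¹)
  have hA_diag (i : ι) : A i i < 1 := sub_lt_self _ (div_pos (hdiag i) (mul_pos (hv i) (hv i)))
  have hrescale : Matrix.of (fun i j => v i ^ t * v j ^ t - B i j ^ t) =
      (A.map fun a => 1 - (1 - a) ^ t) ⊙
        Matrix.vecMulVec (fun i => v i ^ t) (star fun i => v i ^ t) := by
    ext i j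
    have hi := (Real.rpow_pos_of_pos (hv i) t).ne'
    have hj := (Real.rpow_pos_of_pos (hv j) t).ne'
    simp only [A, Matrix.of_apply, Matrix.hadamard_apply, Matrix.map_apply,
      Matrix.vecMulVec_apply, star_trivial, sub_sub_cancel]
    rw [Real.div_rpow (hB i j) (mul_pos (hv i) (hv j)).le, Real.mul_rpow (hv i).le (hv j).le]
    field_simp
  exact hrescale ▸ (posSemidef_map_one_sub_one_sub_rpow ht₀ ht₁ hA hA_diag).hadamard
    (posSemidef_vecMulVec_star _)

end PosSemidef

section HyperbolicKernel

variable {X : Type*} {K : X → X → ℝ}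

theorem hyperbolicCauchySchwarz_iff_posSemidef (hsymm : ∀ x y, K x y = K y x) (x₀ : X) :
    (∀ (n : ℕ) (x : Fin n → X) (lam : Fin n → ℝ),
      ∑ i, ∑ j, lam i * lam j * K (x i) (x j) ≤ (∑ k, lam k * K x₀ (x k)) ^ 2) ↔
      (Matrix.of fun x y => K x₀ x * K x₀ y - K x y).PosSemidef := by
  have hform {n : ℕ} (x : Fin n → X) (lam : Fin n → ℝ) :
      (∑ k, lam k * K x₀ (x k)) ^ 2 - ∑ i, ∑ j, lam i * lam j * K (x i) (x j) =
        ∑ i, ∑ j, lam i * (K x₀ (x i) * K x₀ (x j) - K (x i) (x j)) * lam j := by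
    rw [sq, Finset.sum_mul_sum]
    simp only [← Finset.sum_sub_distrib]
    exact Finset.sum_congr rfl fun i _ => Finset.sum_congr rfl fun j _ => by ring
  refine ⟨fun h => ⟨?_, fun c => ?_⟩, fun h n x lam => ?_⟩
  · ext x y
    simp [hsymm x y, mul_comm]
  · let e := c.support.equivFin
    have hc := h _ (fun i => (e.symm i : X)) (fun i => c (e.symm i))
    rw [← sub_nonneg, hform] at hc
    have hsum (f : X → ℝ) : ∑ a ∈ c.support, f a = ∑ i, f (e.symm i) := by
      rw [← Finset.sum_coe_sort, ← e.symm.sum_comp]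
    simp only [Finsupp.sum, Matrix.of_apply, star_trivial, hsum]
    exact hc
  · rw [← sub_nonneg, hform]
    simpa [dotProduct, Matrix.mulVec, Finset.mul_sum, mul_assoc] using
      (h.submatrix x).dotProduct_mulVec_nonneg lam

namespace IsHypKernel

theorem posSemidef (h : IsHypKernel K) (x₀ : X) :
    (Matrix.of fun x y => K x₀ x * K x₀ y - K x y).PosSemidef :=
  (hyperbolicCauchySchwarz_iff_posSemidef h.1 x₀).1 fun n => h.2.2.2 n x₀

theorem one_le (h : IsHypKernel K) (x y : X) : 1 ≤ K x y := by
  have hsq : 0 ≤ K x y * K x y - K y y := (h.posSemidef x).diag_nonneg (i := y)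
  rw [h.2.2.1 y, ← sq, sub_nonneg] at hsq
  exact (one_le_sq_iff₀ (h.2.1 x y)).1 hsq

theorem rpow (h : IsHypKernel K) {t : ℝ} (ht₀ : 0 ≤ t) (ht₁ : t ≤ 1) :
    IsHypKernel (fun x y => K x y ^ t) := by
  have hpos (x y : X) : 0 < K x y := one_pos.trans_le (h.one_le x y)
  have hsymm (x y : X) : K x y ^ t = K y x ^ t := by rw [h.1]
  refine ⟨hsymm, fun x y => (Real.rpow_pos_of_pos (hpos x y) t).le,
    fun x => by simp [h.2.2.1 x], fun n x₀ => ?_⟩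
  exact (hyperbolicCauchySchwarz_iff_posSemidef hsymm x₀).2
    (posSemidef_rpow_mul_rpow_sub_rpow ht₀ ht₁ (hpos x₀) h.2.1 (fun x => hpos x x)
      (h.posSemidef x₀)) n

theorem rpow_of_le (hK : ∀ x y, 0 ≤ K x y) {s t : ℝ} (hs : 0 ≤ s) (hst : s ≤ t)
    (h : IsHypKernel (fun x y => K x y ^ t)) : IsHypKernel (fun x y => K x y ^ s) := by
  have ht : 0 ≤ t := hs.trans hst
  have hcancel : t * (s / t) = s := mul_div_cancel_of_imp' fun h0 => by linarith
  simpa only [← Real.rpow_mul (hK _ _), hcancel] using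
    h.rpow (div_nonneg hs ht) (div_le_one_of_le₀ hst ht)

end IsHypKernel

theorem isClosed_setOf_isHypKernel : IsClosed {K : X → X → ℝ | IsHypKernel K} := by
  simp only [IsHypKernel, ofPred_and, ofPred_forall]
  refine .inter ?_ (.inter ?_ (.inter ?_ ?_))
  · exact isClosed_iInter fun x => isClosed_iInter fun y => isClosed_eq (by fun_prop) (by fun_prop)
  · exact isClosed_iInter fun x => isClosed_iInter fun y => isClosed_le (by fun_prop) (by fun_prop)
  · exact isClosed_iInter fun x => isClosed_eq (by fun_prop) (by fun_prop)
  · exact isClosed_iInter fun n => isClosed_iInter fun x₀ => isClosed_iInter fun x =>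
      isClosed_iInter fun lam => isClosed_le (by fun_prop) (by fun_prop)

theorem isClosed_setOf_isHypKernel_rpow (hK : ∀ x y, K x y ≠ 0) :
    IsClosed {s : ℝ | IsHypKernel (fun x y => K x y ^ s)} :=
  isClosed_setOf_isHypKernel.preimage <| continuous_pi fun x => continuous_pi fun y =>
    Real.continuous_const_rpow (hK x y)

end HyperbolicKernel

section CriticalExponent

variable {X : Type*} {K : X → X → ℝ}

namespace IsHypKernel

theorem one_le_critExp (h : IsHypKernel K) : 1 ≤ critExp K :=
  le_sSup ⟨1, rfl, le_rfl, by simpa using h⟩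

theorem rpow_of_lt_critExp (hK : ∀ x y, 0 ≤ K x y) {s : ℝ} (hs : 0 ≤ s)
    (hlt : (s : EReal) < critExp K) : IsHypKernel (fun x y => K x y ^ s) := by
  obtain ⟨_, ⟨t, rfl, -, ht⟩, hst⟩ := lt_sSup_iff.1 hlt
  exact rpow_of_le hK hs (EReal.coe_lt_coe_iff.1 hst).le ht

theorem rpow_iff_le_critExp (h : IsHypKernel K) {s : ℝ} (hs : 0 ≤ s) :
    IsHypKernel (fun x y => K x y ^ s) ↔ (s : EReal) ≤ critExp K := by
  rcases le_total s 1 with hs₁ | hs₁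
  · exact iff_of_true (h.rpow hs hs₁) ((EReal.coe_le_coe_iff.2 hs₁).trans h.one_le_critExp)
  refine ⟨fun hKs => le_sSup ⟨s, rfl, hs₁, hKs⟩, fun hle => ?_⟩
  have hclosed := isClosed_setOf_isHypKernel_rpow fun x y => (one_pos.trans_le (h.one_le x y)).ne'
  have hsub : Ico 0 s ⊆ {u : ℝ | IsHypKernel (fun x y => K x y ^ u)} := fun u hu =>
    rpow_of_lt_critExp h.2.1 hu.1 ((EReal.coe_lt_coe_iff.2 hu.2).trans_le hle)
  have hmem : s ∈ closure (Ico 0 s) := by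
    rw [closure_Ico (by linarith)]
    exact right_mem_Icc.2 hs
  exact closure_minimal hsub hclosed hmem

end IsHypKernel

theorem isClosed_setOf_le_critExp {s : ℝ} (hs : 0 ≤ s) :
    IsClosed {K : {K : X → X → ℝ // IsHypKernel K} | (s : EReal) ≤ critExp K.1} := by
  have hcont : Continuous fun (K : {K : X → X → ℝ // IsHypKernel K}) x y => K.1 x y ^ s :=
    continuous_pi fun x => continuous_pi fun y =>
      (Real.continuous_rpow_const hs).comp (continuous_apply_apply x y |>.comp
        continuous_subtype_val)
  simp only [← fun K : {K : X → X → ℝ // IsHypKernel K} => K.2.rpow_iff_le_critExp hs]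
  exact isClosed_setOf_isHypKernel.preimage hcont

end CriticalExponent

/-- (a) The critical exponent is upper semicontinuous on `𝓚(X)` (pointwise-convergence
topology); (b) if `t_K < ∞` then `K^{t_K}` is again a kernel of hyperbolic type. -/
theorem critExp_upperSemicontinuous_and_pow_critExp_isHypKernel {X : Type*} :
    UpperSemicontinuous (fun K : {K : X → X → ℝ // IsHypKernel K} => critExp K.1) ∧
    ∀ K : {K : X → X → ℝ // IsHypKernel K}, critExp K.1 < ⊤ →
      IsHypKernel (fun x y => K.1 x y ^ (critExp K.1).toReal) := by
  refine ⟨fun K c hc => ?_, fun K hK => ?_⟩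
  · obtain ⟨s, hKs, hsc⟩ := EReal.lt_iff_exists_real_btwn.1 hc
    have hs : 0 ≤ s := by
      exact_mod_cast (zero_le_one.trans K.2.one_le_critExp).trans hKs.le
    filter_upwards [(isClosed_setOf_le_critExp hs).isOpen_compl.mem_nhds (not_le.2 hKs)] with L hL
    exact (not_le.1 (notMem_ofPred_iff.1 hL)).trans hsc
  · have h₀ : 0 ≤ critExp K.1 := zero_le_one.trans K.2.one_le_critExp
    have hreal : ((critExp K.1).toReal : EReal) = critExp K.1 :=
      EReal.coe_toReal hK.ne (EReal.bot_lt_zero.trans_le h₀).ne'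
    exact (K.2.rpow_iff_le_critExp (EReal.toReal_nonneg h₀)).2 hreal.le
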